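/- arXiv:2102.06347 — 3 statements merged into one kernel-verified Lean document; each statement's English description precedes it below -/
import Mathlib

section
/- Let c ≠ 0, ξ > 0, ρ > 0, σ > 0 and θ, φ be real numbers satisfying the critical-point equations: 4ρcos(θ)(ρ²−1) = cσ²cos(2φ), 4ρsin(θ)(ρ²−1) = cσ²sin(2φ), ξσcos(φ)(σ²−1) = 2σρc·cos(θ−φ), ξσsin(φ)(σ²−1) = 2σρc·sin(θ−φ). If in addition 2φ − θ = (2n+1)π for some integer n, then σ² = 1 − 2ρc/ξ and ρ satisfies the cubic equation ρ³ − ρ(1 + c²/(2ξ)) + c/4 = 0. -/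
open Real

/-!
The first two critical-point equations equate a vector of signed length `4ρ(ρ² − 1)` at angle `θ`
with one of signed length `cσ²` at angle `2φ`; the last two, divided by `σ`, equate `ξ(σ² − 1)` at
angle `φ` with `2ρc` at angle `θ − φ`. In both pairs the angles differ by `2φ − θ`, up to sign. When
this is an odd multiple of `π` the directions are opposite, so `4ρ(ρ² − 1) = −cσ²` and
`ξ(σ² − 1) = −2ρc`. Eliminating `σ²` gives the cubic.
-/

theorem eq_of_mul_cos_eq_of_mul_sin_eq {a b x : ℝ} (hcos : a * cos x = b * cos x)
    (hsin : a * sin x = b * sin x) : a = b := by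
  linear_combination cos x * hcos + sin x * hsin - (a - b) * sin_sq_add_cos_sq x

theorem eq_neg_of_mul_cos_eq_of_mul_sin_eq {a b x y : ℝ}
    (hxy : ∃ n : ℤ, x - y = (2 * n + 1) * π) (hcos : a * cos x = b * cos y)
    (hsin : a * sin x = b * sin y) : a = -b := by
  obtain ⟨n, hn⟩ := hxy
  have hx : x = y + (n * (2 * π) + π) := by linear_combination hn
  have cos_eq_neg : cos x = -cos y := hx ▸ cos_antiperiodic.int_odd_mul_antiperiodic n y
  have sin_eq_neg : sin x = -sin y := hx ▸ sin_antiperiodic.int_odd_mul_antiperiodic n y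
  apply eq_of_mul_cos_eq_of_mul_sin_eq (x := x)
  · rw [hcos, cos_eq_neg, neg_mul_neg]
  · rw [hsin, sin_eq_neg, neg_mul_neg]

/-- The amplitudes are signed here: `(-ρ, θ + π)` describes the same tensor as `(ρ, θ)`, so even
multiples of `π` are covered as well, with the sign of `ρ` reversed. -/
theorem critical_point_odd_alignment_general {c ξ ρ σ θ φ : ℝ} (hξ : ξ ≠ 0) (hσ : σ ≠ 0)
    (hQ_cos : 4 * ρ * cos θ * (ρ ^ 2 - 1) = c * σ ^ 2 * cos (2 * φ))
    (hQ_sin : 4 * ρ * sin θ * (ρ ^ 2 - 1) = c * σ ^ 2 * sin (2 * φ))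
    (hM_cos : ξ * σ * cos φ * (σ ^ 2 - 1) = 2 * σ * ρ * c * cos (θ - φ))
    (hM_sin : ξ * σ * sin φ * (σ ^ 2 - 1) = 2 * σ * ρ * c * sin (θ - φ))
    (halign : ∃ n : ℤ, 2 * φ - θ = (2 * n + 1) * π) :
    σ ^ 2 = 1 - 2 * ρ * c / ξ ∧ ρ ^ 3 - ρ * (1 + c ^ 2 / (2 * ξ)) + c / 4 = 0 := by
  have hQ : c * σ ^ 2 = -(4 * ρ * (ρ ^ 2 - 1)) :=
    eq_neg_of_mul_cos_eq_of_mul_sin_eq halign (by linear_combination -hQ_cos)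
      (by linear_combination -hQ_sin)
  have hM_align : ∃ n : ℤ, φ - (θ - φ) = (2 * n + 1) * π := by
    convert halign using 3
    ring
  have hM_mul : σ * (ξ * (σ ^ 2 - 1)) = -(σ * (2 * ρ * c)) :=
    eq_neg_of_mul_cos_eq_of_mul_sin_eq hM_align (by linear_combination hM_cos)
      (by linear_combination hM_sin)
  have hM : ξ * (σ ^ 2 - 1) = -(2 * ρ * c) :=
    mul_left_cancel₀ hσ (by rw [hM_mul, mul_neg])
  constructor
  · field_simp
    linear_combination hM
  · field_simp
    linear_combination 2 * ξ * hQ - 2 * c * hM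

/-- At a critical point of the ferronematic bulk potential with alignment
`2φ − θ = (2n+1)π`, one has `σ² = 1 − 2ρc/ξ` and `ρ` solves the cubic
`ρ³ − ρ(1 + c²/(2ξ)) + c/4 = 0`. -/
theorem critical_point_odd_alignment (c ξ ρ σ θ φ : ℝ) (hc : c ≠ 0) (hξ : 0 < ξ)
    (hρ : 0 < ρ) (hσ : 0 < σ)
    (h1 : 4 * ρ * Real.cos θ * (ρ ^ 2 - 1) = c * σ ^ 2 * Real.cos (2 * φ))
    (h2 : 4 * ρ * Real.sin θ * (ρ ^ 2 - 1) = c * σ ^ 2 * Real.sin (2 * φ))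
    (h3 : ξ * σ * Real.cos φ * (σ ^ 2 - 1) = 2 * σ * ρ * c * Real.cos (θ - φ))
    (h4 : ξ * σ * Real.sin φ * (σ ^ 2 - 1) = 2 * σ * ρ * c * Real.sin (θ - φ))
    (halign : ∃ n : ℤ, 2 * φ - θ = (2 * n + 1) * π) :
    σ ^ 2 = 1 - 2 * ρ * c / ξ ∧ ρ ^ 3 - ρ * (1 + c ^ 2 / (2 * ξ)) + c / 4 = 0 :=
  critical_point_odd_alignment_general hξ.ne' hσ.ne' h1 h2 h3 h4 halign
end

section
/- Maximum principle for order-reconstruction solutions: let l > 0, c > 0, and let Q₁₁, M₁ : ℝ → ℝ be twice continuously differentiable on [−1,1], satisfy on (−1,1) the system l·Q₁₁'' = 4Q₁₁(Q₁₁²−1) − cM₁² and l·M₁'' = M₁(M₁²−1) − 2cQ₁₁M₁, and satisfy the boundary conditions Q₁₁(−1)=M₁(−1)=1, Q₁₁(1)=M₁(1)=−1. Then for all y ∈ [−1,1]: |Q₁₁(y)| ≤ ρ*(c) and M₁(y)² ≤ 1 + 2c·ρ*(c). -/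
open Set

/-!
If `Q₁₁ ≤ T`, then at an interior maximum of `M₁²` the second equation gives
`M₁² (M₁² - 1 - 2c Q₁₁) ≤ 0`, so `M₁² ≤ 1 + 2cT`. Inserting this with `T = max Q₁₁` in the first
equation at a maximum point of `Q₁₁` closes the loop: it yields `T³ - (1 + c²/2) T - c/4 ≤ 0`, that
is `T ≤ ρ*(c)`. The lower bound on `Q₁₁` comes from `4 Q₁₁ (Q₁₁² - 1) ≥ c M₁² ≥ 0` at an interior
minimum.
-/

section SecondDerivative

variable {f : ℝ → ℝ} {a : ℝ}

theorem deriv_deriv_nonpos_of_isLocalMax (h : IsLocalMax f a) (hf : ContinuousAt f a) :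
    deriv (deriv f) a ≤ 0 := by
  by_contra! hpos
  -- The second derivative test makes `a` a local minimum too, so `f` is locally constant.
  have hmin : IsLocalMin f a := isLocalMin_of_deriv_deriv_pos hpos h.deriv_eq_zero hf
  have hconst : f =ᶠ[nhds a] fun _ => f a := by
    filter_upwards [h, hmin] with x hle hge using le_antisymm hle hge
  have hzero : deriv (deriv f) a = 0 := by
    rw [hconst.deriv.deriv_eq, deriv_const', deriv_const]
  exact hpos.ne' hzero

theorem deriv_deriv_nonneg_of_isLocalMin (h : IsLocalMin f a) (hf : ContinuousAt f a) :
    0 ≤ deriv (deriv f) a := by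
  have hneg : deriv (deriv (-f)) a ≤ 0 := deriv_deriv_nonpos_of_isLocalMax h.neg hf.neg
  rwa [deriv.neg', deriv.fun_neg, neg_nonpos] at hneg

theorem mul_deriv_deriv_nonpos_of_isLocalMax_sq (h : IsLocalMax (fun x => f x ^ 2) a)
    (hf : ContinuousAt f a) : f a * deriv (deriv f) a ≤ 0 := by
  have habs : ∀ᶠ x in nhds a, |f x| ≤ |f a| := h.mono fun _ hx => sq_le_sq.mp hx
  rcases le_total 0 (f a) with hpos | hneg
  · have hmax : IsLocalMax f a :=
      habs.mono fun x hx => (le_abs_self _).trans (hx.trans_eq (abs_of_nonneg hpos))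
    exact mul_nonpos_of_nonneg_of_nonpos hpos (deriv_deriv_nonpos_of_isLocalMax hmax hf)
  · have hmin : IsLocalMin f a :=
      habs.mono fun x hx => neg_le_neg_iff.mp <|
        (neg_le_abs _).trans (hx.trans_eq (abs_of_nonpos hneg))
    exact mul_nonpos_of_nonpos_of_nonneg hneg (deriv_deriv_nonneg_of_isLocalMin hmin hf)

end SecondDerivative

section Interval

variable {α β : Type*} [PartialOrder α] [TopologicalSpace α] [CompactIccSpace α]
  [LinearOrder β] [TopologicalSpace β] {f : α → β} {a b : α} {K : β}

theorem forall_mem_Icc_le_of_isMaxOn [ClosedIciTopology β] (hf : ContinuousOn f (Icc a b))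
    (ha : f a ≤ K) (hb : f b ≤ K)
    (hmax : ∀ x ∈ Ioo a b, IsMaxOn f (Icc a b) x → f x ≤ K) :
    ∀ y ∈ Icc a b, f y ≤ K := by
  intro y hy
  obtain ⟨x, hx, hxmax⟩ := isCompact_Icc.exists_isMaxOn ⟨y, hy⟩ hf
  refine (hxmax hy).trans ?_
  rcases eq_endpoints_or_mem_Ioo_of_mem_Icc hx with rfl | rfl | hxI
  · exact ha
  · exact hb
  · exact hmax x hxI hxmax

theorem forall_mem_Icc_ge_of_isMinOn [ClosedIicTopology β] (hf : ContinuousOn f (Icc a b))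
    (ha : K ≤ f a) (hb : K ≤ f b)
    (hmin : ∀ x ∈ Ioo a b, IsMinOn f (Icc a b) x → K ≤ f x) :
    ∀ y ∈ Icc a b, K ≤ f y :=
  forall_mem_Icc_le_of_isMaxOn (β := βᵒᵈ) hf ha hb hmin

end Interval

theorem le_of_depressed_cubic_nonpos {p q ρ x : ℝ} (hq : 0 ≤ q) (hρ : 0 < ρ)
    (hroot : ρ ^ 3 - p * ρ - q = 0) (hx : x ^ 3 - p * x - q ≤ 0) : x ≤ ρ := by
  by_contra! hlt
  have hp : 0 ≤ ρ ^ 2 - p := nonneg_of_mul_nonneg_right (by linarith : 0 ≤ ρ * (ρ ^ 2 - p)) hρ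
  have hfactor : x ^ 3 - p * x - q = (x - ρ) * (x ^ 2 + x * ρ + (ρ ^ 2 - p)) := by
    linear_combination hroot
  have hx0 : 0 < x := hρ.trans hlt
  have hquad : 0 < x ^ 2 + x * ρ + (ρ ^ 2 - p) := by positivity
  exact hx.not_gt (hfactor ▸ mul_pos (sub_pos.mpr hlt) hquad)

theorem one_le_of_cubic_eq_zero {c ρ : ℝ} (hc : 0 ≤ c) (hρ : 0 < ρ)
    (hroot : ρ ^ 3 - (1 + c ^ 2 / 2) * ρ - c / 4 = 0) : 1 ≤ ρ :=
  le_of_depressed_cubic_nonpos (by positivity) hρ hroot (by nlinarith)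

/-- Classical solutions of the order-reconstruction system with elastic constant `l` and coupling
parameter `c` on the interval `[a, b]`, without boundary conditions. Interior smoothness is part of
the notion so that `deriv (deriv _)` is a genuine second derivative. -/
structure IsORSolutionOn (l c a b : ℝ) (Q M : ℝ → ℝ) : Prop where
  continuousOn_Q : ContinuousOn Q (Icc a b)
  continuousOn_M : ContinuousOn M (Icc a b)
  contDiffOn_Q : ContDiffOn ℝ 2 Q (Ioo a b)
  contDiffOn_M : ContDiffOn ℝ 2 M (Ioo a b)
  ode_Q : ∀ y ∈ Ioo a b, l * deriv (deriv Q) y = 4 * Q y * (Q y ^ 2 - 1) - c * M y ^ 2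
  ode_M : ∀ y ∈ Ioo a b, l * deriv (deriv M) y = M y * (M y ^ 2 - 1) - 2 * c * Q y * M y

namespace IsORSolutionOn

variable {l c a b : ℝ} {Q M : ℝ → ℝ}

theorem sq_M_le (h : IsORSolutionOn l c a b Q M) (hl : 0 ≤ l) (hc : 0 ≤ c) {T : ℝ}
    (hT : 0 ≤ 1 + 2 * c * T) (hQ : ∀ y ∈ Icc a b, Q y ≤ T)
    (ha : M a ^ 2 ≤ 1 + 2 * c * T) (hb : M b ^ 2 ≤ 1 + 2 * c * T) :
    ∀ y ∈ Icc a b, M y ^ 2 ≤ 1 + 2 * c * T := by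
  refine forall_mem_Icc_le_of_isMaxOn (h.continuousOn_M.pow 2) ha hb fun x hx hmax => ?_
  have hIcc : Icc a b ∈ nhds x := Icc_mem_nhds hx.1 hx.2
  have hMM : M x * deriv (deriv M) x ≤ 0 :=
    mul_deriv_deriv_nonpos_of_isLocalMax_sq (hmax.isLocalMax hIcc)
      (h.continuousOn_M.continuousAt hIcc)
  have hprod : M x ^ 2 * (M x ^ 2 - (1 + 2 * c * Q x)) ≤ 0 := calc
    _ = l * (M x * deriv (deriv M) x) := by linear_combination -M x * h.ode_M x hx
    _ ≤ 0 := mul_nonpos_of_nonneg_of_nonpos hl hMM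
  have hQT : 1 + 2 * c * Q x ≤ 1 + 2 * c * T := by
    gcongr
    exact hQ x (Ioo_subset_Icc_self hx)
  rcases (sq_nonneg (M x)).eq_or_lt with hzero | hpos
  · exact hzero ▸ hT
  · exact (sub_nonpos.mp (nonpos_of_mul_nonpos_right hprod hpos)).trans hQT

theorem le_Q (h : IsORSolutionOn l c a b Q M) (hl : 0 ≤ l) (hc : 0 ≤ c) {m : ℝ} (hm : m ≤ -1)
    (ha : m ≤ Q a) (hb : m ≤ Q b) : ∀ y ∈ Icc a b, m ≤ Q y := by
  refine forall_mem_Icc_ge_of_isMinOn h.continuousOn_Q ha hb fun x hx hmin => hm.trans ?_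
  have hIcc : Icc a b ∈ nhds x := Icc_mem_nhds hx.1 hx.2
  have hQQ : 0 ≤ deriv (deriv Q) x :=
    deriv_deriv_nonneg_of_isLocalMin (hmin.isLocalMin hIcc) (h.continuousOn_Q.continuousAt hIcc)
  have hforce : 0 ≤ 4 * Q x * (Q x ^ 2 - 1) := calc
    0 ≤ l * deriv (deriv Q) x + c * M x ^ 2 := by positivity
    _ = 4 * Q x * (Q x ^ 2 - 1) := by linear_combination h.ode_Q x hx
  by_contra! hlt
  have hsq : 0 < Q x ^ 2 - 1 := by nlinarith
  exact hforce.not_gt (mul_neg_of_neg_of_pos (by linarith) hsq)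

theorem cubic_nonpos_of_isMaxOn (h : IsORSolutionOn l c a b Q M) (hl : 0 ≤ l) (hc : 0 ≤ c)
    {x : ℝ} (hx : x ∈ Ioo a b) (hmax : IsMaxOn Q (Icc a b) x) (hM : M x ^ 2 ≤ 1 + 2 * c * Q x) :
    Q x ^ 3 - (1 + c ^ 2 / 2) * Q x - c / 4 ≤ 0 := by
  have hIcc : Icc a b ∈ nhds x := Icc_mem_nhds hx.1 hx.2
  have hQQ : deriv (deriv Q) x ≤ 0 :=
    deriv_deriv_nonpos_of_isLocalMax (hmax.isLocalMax hIcc) (h.continuousOn_Q.continuousAt hIcc)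
  have hforce : 4 * Q x * (Q x ^ 2 - 1) ≤ c * (1 + 2 * c * Q x) := calc
    _ = l * deriv (deriv Q) x + c * M x ^ 2 := by linear_combination -h.ode_Q x hx
    _ ≤ 0 + c * (1 + 2 * c * Q x) := by
      gcongr
      exact mul_nonpos_of_nonneg_of_nonpos hl hQQ
    _ = c * (1 + 2 * c * Q x) := zero_add _
  linarith

theorem Q_le (h : IsORSolutionOn l c a b Q M) (hl : 0 ≤ l) (hc : 0 ≤ c) {ρ : ℝ} (hρ : 0 < ρ)
    (hroot : ρ ^ 3 - (1 + c ^ 2 / 2) * ρ - c / 4 = 0) (hQa : Q a ≤ ρ) (hQb : Q b ≤ ρ)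
    (hMa : M a ^ 2 ≤ 1 + 2 * c * ρ) (hMb : M b ^ 2 ≤ 1 + 2 * c * ρ) :
    ∀ y ∈ Icc a b, Q y ≤ ρ := by
  refine forall_mem_Icc_le_of_isMaxOn h.continuousOn_Q hQa hQb fun x hx hmax => ?_
  by_contra! hlt
  have hρx : 1 + 2 * c * ρ ≤ 1 + 2 * c * Q x := by gcongr
  have hM : M x ^ 2 ≤ 1 + 2 * c * Q x :=
    h.sq_M_le hl hc (le_trans (by positivity) hρx) (fun _ hy => hmax hy) (hMa.trans hρx)
      (hMb.trans hρx) x (Ioo_subset_Icc_self hx)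
  exact hlt.not_ge <| le_of_depressed_cubic_nonpos (by positivity) hρ hroot
    (h.cubic_nonpos_of_isMaxOn hl hc hx hmax hM)

end IsORSolutionOn

theorem or_maximum_principle_general {l c a b ρ : ℝ} {Q M : ℝ → ℝ} (hl : 0 ≤ l) (hc : 0 ≤ c)
    (hρ : 0 < ρ) (hroot : ρ ^ 3 - (1 + c ^ 2 / 2) * ρ - c / 4 = 0)
    (h : IsORSolutionOn l c a b Q M) (hQa : |Q a| ≤ ρ) (hQb : |Q b| ≤ ρ)
    (hMa : M a ^ 2 ≤ 1 + 2 * c * ρ) (hMb : M b ^ 2 ≤ 1 + 2 * c * ρ) :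
    ∀ y ∈ Icc a b, |Q y| ≤ ρ ∧ M y ^ 2 ≤ 1 + 2 * c * ρ := by
  have hupper : ∀ y ∈ Icc a b, Q y ≤ ρ :=
    h.Q_le hl hc hρ hroot (abs_le.mp hQa).2 (abs_le.mp hQb).2 hMa hMb
  have hlower : ∀ y ∈ Icc a b, -ρ ≤ Q y :=
    h.le_Q hl hc (neg_le_neg (one_le_of_cubic_eq_zero hc hρ hroot))
      (abs_le.mp hQa).1 (abs_le.mp hQb).1
  have hM : ∀ y ∈ Icc a b, M y ^ 2 ≤ 1 + 2 * c * ρ :=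
    h.sq_M_le hl hc (by positivity) hupper hMa hMb
  exact fun y hy => ⟨abs_le.mpr ⟨hlower y hy, hupper y hy⟩, hM y hy⟩

/-- Maximum principle for order-reconstruction solutions: `|Q₁₁| ≤ ρ*(c)` and
`M₁² ≤ 1 + 2cρ*(c)`, where `ρ*(c)` is the unique positive root of
`x³ − (1 + c²/2)x − c/4`. -/
theorem or_maximum_principle (l c ρStar : ℝ) (hl : 0 < l) (hc : 0 < c)
    (hρpos : 0 < ρStar)
    (hρroot : ρStar ^ 3 - (1 + c ^ 2 / 2) * ρStar - c / 4 = 0)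
    (Q11 M1 : ℝ → ℝ)
    (hQ11 : ContDiffOn ℝ 2 Q11 (Icc (-1) 1))
    (hM1 : ContDiffOn ℝ 2 M1 (Icc (-1) 1))
    (hode1 : ∀ y ∈ Ioo (-1 : ℝ) 1, l * deriv (deriv Q11) y =
      4 * Q11 y * ((Q11 y) ^ 2 - 1) - c * (M1 y) ^ 2)
    (hode2 : ∀ y ∈ Ioo (-1 : ℝ) 1, l * deriv (deriv M1) y =
      M1 y * ((M1 y) ^ 2 - 1) - 2 * c * Q11 y * M1 y)
    (hbc1 : Q11 (-1) = 1) (hbc2 : M1 (-1) = 1)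
    (hbc3 : Q11 1 = -1) (hbc4 : M1 1 = -1) :
    ∀ y ∈ Icc (-1 : ℝ) 1,
      |Q11 y| ≤ ρStar ∧ (M1 y) ^ 2 ≤ 1 + 2 * c * ρStar := by
  have hsol : IsORSolutionOn l c (-1) 1 Q11 M1 :=
    ⟨hQ11.continuousOn, hM1.continuousOn, hQ11.mono Ioo_subset_Icc_self,
      hM1.mono Ioo_subset_Icc_self, hode1, hode2⟩
  have hρone : 1 ≤ ρStar := one_le_of_cubic_eq_zero hc.le hρpos hρroot
  have hMbound : 1 ≤ 1 + 2 * c * ρStar := le_add_of_nonneg_right (by positivity)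
  exact or_maximum_principle_general hl.le hc.le hρpos hρroot hsol
    (by simpa [hbc1] using hρone) (by simpa [hbc3] using hρone)
    (by simpa [hbc2] using hMbound) (by simpa [hbc4] using hMbound)
end

section
/- Convergence to the linear order-reconstruction profile as l → ∞: for every c > 0 there exist constants α₁ > 0 and α₂ > 0, depending only on c, such that for every l > 0 and every quadruple (Q₁₁, Q₁₂, M₁, M₂) of functions twice continuously differentiable on [−1,1] satisfying on (−1,1) the system l·Q₁₁'' = 4Q₁₁(Q₁₁²+Q₁₂²−1) − c(M₁²−M₂²), l·Q₁₂'' = 4Q₁₂(Q₁₁²+Q₁₂²−1) − 2cM₁M₂, l·M₁'' = M₁(M₁²+M₂²−1) − 2cQ₁₁M₁ − 2cQ₁₂M₂, l·M₂'' = M₂(M₁²+M₂²−1) + 2cQ₁₁M₂ − 2cQ₁₂M₁, with boundary conditions Q₁₁(−1)=M₁(−1)=1, Q₁₁(1)=M₁(1)=−1, Q₁₂(±1)=M₂(±1)=0, one has for all y ∈ [−1,1]: |Q₁₁(y) + y| ≤ α₁/l, |Q₁₂(y)| ≤ α₁/l, |M₁(y) + y| ≤ α₂/l, and |M₂(y)|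 ≤ α₂/l. -/
open Set

/-- A quadruple `(Q11, Q12, M1, M2)` is a classical solution of the ferronematic
Euler–Lagrange system on `[−1,1]` with elastic constant `l`, coupling `c` and
`ξ = 1`, with the given Dirichlet boundary conditions. -/
def FerroSolution (l c : ℝ) (Q11 Q12 M1 M2 : ℝ → ℝ) : Prop :=
  ContDiffOn ℝ 2 Q11 (Icc (-1) 1) ∧ ContDiffOn ℝ 2 Q12 (Icc (-1) 1) ∧
  ContDiffOn ℝ 2 M1 (Icc (-1) 1) ∧ ContDiffOn ℝ 2 M2 (Icc (-1) 1) ∧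
  (∀ y ∈ Ioo (-1 : ℝ) 1, l * deriv (deriv Q11) y =
    4 * Q11 y * ((Q11 y) ^ 2 + (Q12 y) ^ 2 - 1) - c * ((M1 y) ^ 2 - (M2 y) ^ 2)) ∧
  (∀ y ∈ Ioo (-1 : ℝ) 1, l * deriv (deriv Q12) y =
    4 * Q12 y * ((Q11 y) ^ 2 + (Q12 y) ^ 2 - 1) - 2 * c * M1 y * M2 y) ∧
  (∀ y ∈ Ioo (-1 : ℝ) 1, l * deriv (deriv M1) y =
    M1 y * ((M1 y) ^ 2 + (M2 y) ^ 2 - 1) - 2 * c * Q11 y * M1 y - 2 * c * Q12 y * M2 y) ∧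
  (∀ y ∈ Ioo (-1 : ℝ) 1, l * deriv (deriv M2) y =
    M2 y * ((M1 y) ^ 2 + (M2 y) ^ 2 - 1) + 2 * c * Q11 y * M2 y - 2 * c * Q12 y * M1 y) ∧
  Q11 (-1) = 1 ∧ M1 (-1) = 1 ∧ Q11 1 = -1 ∧ M1 1 = -1 ∧
  Q12 (-1) = 0 ∧ Q12 1 = 0 ∧ M2 (-1) = 0 ∧ M2 1 = 0

/-!
The right-hand side of the system is a cubic vector field `F` on `ℝ⁴`, independent of `l`, which
points outwards outside some ball: `⟪x, F x⟫ > 0` when `‖x‖` is large. Hence `‖u‖²` is strictly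
convex wherever a solution `u` of `l u'' = F u` leaves the ball, and the maximum principle keeps `u`
inside it whatever `l > 0` is. There `F` is bounded by compactness, so `‖u''‖ ≤ K / l`, and
comparison with a parabola puts `u` within `K / (2 l)` of the line with the same boundary values.
-/

open scoped RealInnerProductSpace

section SecondDerivative

variable {E : Type*} [NormedAddCommGroup E] [NormedSpace ℝ E] {u : ℝ → E} {y : ℝ}

theorem deriv_deriv_clm_comp {G : Type*} [NormedAddCommGroup G] [NormedSpace ℝ G]
    (L : E →L[ℝ] G) (hu : ContDiffAt ℝ 2 u y) :
    deriv (deriv fun z => L (u z)) y = L (deriv (deriv u) y) := by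
  have hcomp : iteratedDeriv 2 (L ∘ u) y = L (iteratedDeriv 2 u y) := by
    simp only [iteratedDeriv_eq_iteratedFDeriv, L.iteratedFDeriv_comp_left hu le_rfl,
      ContinuousLinearMap.compContinuousMultilinearMap_coe, Function.comp_apply]
  simpa only [iteratedDeriv_succ, iteratedDeriv_zero, Function.comp_def] using hcomp

theorem deriv_deriv_sub {w : ℝ → E} (hu : ContDiffAt ℝ 2 u y)
    (hw : ContDiffAt ℝ 2 w y) :
    deriv (deriv fun z => u z - w z) y = deriv (deriv u) y - deriv (deriv w) y := by
  simpa only [iteratedDeriv_succ, iteratedDeriv_zero] using iteratedDeriv_fun_sub hu hw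

theorem deriv_deriv_add_smul (p v : E) (y : ℝ) :
    deriv (deriv fun z : ℝ => p + z • v) y = 0 := by
  have hderiv : deriv (fun z : ℝ => p + z • v) = fun _ => v := by
    ext1 z
    simpa using (((hasDerivAt_id z).smul_const v).const_add p).deriv
  rw [hderiv, deriv_const]

theorem deriv_deriv_mul_sub_mul_sub (k a b y : ℝ) :
    deriv (deriv fun z => k * ((z - a) * (b - z))) y = -(2 * k) := by
  have hderiv : deriv (fun z => k * ((z - a) * (b - z))) = fun z => k * (a + b - 2 * z) := by
    ext z
    have hmul := ((hasDerivAt_id' z).sub_const a).fun_mul ((hasDerivAt_id' z).const_sub b)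
    rw [(hmul.const_mul k).deriv]
    ring
  simp only [hderiv, deriv_const_mul_field', deriv_const_sub, deriv_const_mul_id']
  ring

theorem deriv_deriv_norm_sq {H : Type*} [NormedAddCommGroup H] [InnerProductSpace ℝ H]
    {u : ℝ → H} (hu : ContDiffAt ℝ 2 u y) :
    deriv (deriv fun z => ‖u z‖ ^ 2) y =
      2 * (‖deriv u y‖ ^ 2 + ⟪u y, deriv (deriv u) y⟫) := by
  have hderiv : deriv (fun z => ‖u z‖ ^ 2) =ᶠ[nhds y] fun z => 2 * ⟪u z, deriv u z⟫ := by
    filter_upwards [hu.eventually (by simp)] with z hz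
    exact (hz.differentiableAt two_ne_zero).hasDerivAt.norm_sq.deriv
  have hu' : DifferentiableAt ℝ (deriv u) y :=
    (hu.derivWithin (m := 1) (by norm_num)).differentiableAt one_ne_zero
  have hinner := (hu.differentiableAt two_ne_zero).hasDerivAt.inner ℝ hu'.hasDerivAt
  rw [hderiv.deriv_eq, (hinner.const_mul 2).deriv, real_inner_self_eq_norm_sq, add_comm]

end SecondDerivative

theorem exists_pos_norm_le_of_continuous {E G : Type*} [SeminormedAddCommGroup E] [ProperSpace E]
    [SeminormedAddCommGroup G] {F : E → G} (hF : Continuous F) (R : ℝ) :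
    ∃ K > 0, ∀ x, ‖x‖ ≤ R → ‖F x‖ ≤ K := by
  obtain ⟨K, hK0, hK⟩ :=
    ((isCompact_closedBall (0 : E) R).image hF).isBounded.exists_pos_norm_le
  exact ⟨K, hK0, fun x hx => hK _ (mem_image_of_mem _ (mem_closedBall_zero_iff.2 hx))⟩

section MaximumPrinciple

variable {a b : ℝ}

-- At a maximum above `R` the second derivative test also gives a local minimum, so `f` would be
-- locally constant there.
theorem le_of_deriv_deriv_pos_of_lt {f : ℝ → ℝ} {R : ℝ} (hf : ContinuousOn f (Icc a b))
    (hpos : ∀ y ∈ Ioo a b, R < f y → 0 < deriv (deriv f) y) (ha : f a ≤ R) (hb : f b ≤ R) :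
    ∀ y ∈ Icc a b, f y ≤ R := by
  intro y hy
  obtain ⟨x, hx, hmax⟩ := isCompact_Icc.exists_isMaxOn ⟨y, hy⟩ hf
  refine (hmax hy).trans (not_lt.1 fun hlt => ?_)
  have hx' : x ∈ Ioo a b :=
    ⟨hx.1.lt_of_ne (by rintro rfl; exact ha.not_gt hlt),
      hx.2.lt_of_ne (by rintro rfl; exact hb.not_gt hlt)⟩
  have hnhds : Icc a b ∈ nhds x := Icc_mem_nhds hx'.1 hx'.2
  have hlmax : IsLocalMax f x := hmax.isLocalMax hnhds
  have hlmin : IsLocalMin f x :=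
    isLocalMin_of_deriv_deriv_pos (hpos x hx' hlt) hlmax.deriv_eq_zero (hf.continuousAt hnhds)
  have hconst : f =ᶠ[nhds x] fun _ => f x := by
    filter_upwards [hlmax, hlmin] with z hle hge using le_antisymm hle hge
  have hzero : deriv (deriv f) x = 0 := by simp [hconst.deriv.deriv_eq]
  exact (hpos x hx' hlt).ne' hzero

-- Subtracting the bound from `f` leaves a convex function that is nonpositive at the end points.
theorem le_mul_of_neg_le_deriv_deriv {f : ℝ → ℝ} {K : ℝ} (hfc : ContinuousOn f (Icc a b))
    (hf : ContDiffOn ℝ 2 f (Ioo a b)) (hK : ∀ y ∈ Ioo a b, -K ≤ deriv (deriv f) y)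
    (ha : f a ≤ 0) (hb : f b ≤ 0) : ∀ y ∈ Icc a b, f y ≤ K / 2 * ((y - a) * (b - y)) := by
  intro y hy
  have hab : a ≤ b := hy.1.trans hy.2
  set g : ℝ → ℝ := fun z => f z - K / 2 * ((z - a) * (b - z)) with hg
  have hgc : ContDiffOn ℝ 2 g (Ioo a b) := hf.sub (by fun_prop)
  have hconvex : ConvexOn ℝ (Icc a b) g := by
    refine convexOn_of_deriv2_nonneg (convex_Icc a b) (hfc.sub (by fun_prop)) ?_ ?_ ?_ <;>
      rw [interior_Icc]
    · exact hgc.differentiableOn two_ne_zero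
    · exact (hgc.deriv_of_isOpen (m := 1) isOpen_Ioo (by norm_num)).differentiableOn one_ne_zero
    · intro z hz
      have hderiv : deriv (deriv g) z = deriv (deriv f) z + K := by
        rw [hg, deriv_deriv_sub (hf.contDiffAt (isOpen_Ioo.mem_nhds hz)) (by fun_prop),
          deriv_deriv_mul_sub_mul_sub]
        ring
      change 0 ≤ deriv (deriv g) z
      linarith [hK z hz]
  have hle := hconvex.le_max_of_mem_Icc (left_mem_Icc.2 hab) (right_mem_Icc.2 hab) hy
  have hends : max (g a) (g b) ≤ 0 := by simp [hg, ha, hb]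
  exact sub_nonpos.1 (hle.trans hends)

variable {E : Type*} [NormedAddCommGroup E] [InnerProductSpace ℝ E] {u : ℝ → E}

theorem norm_le_of_inner_deriv_deriv_pos {R : ℝ} (huc : ContinuousOn u (Icc a b))
    (hu : ContDiffOn ℝ 2 u (Ioo a b))
    (hpos : ∀ y ∈ Ioo a b, R < ‖u y‖ → 0 < ⟪u y, deriv (deriv u) y⟫)
    (ha : ‖u a‖ ≤ R) (hb : ‖u b‖ ≤ R) : ∀ y ∈ Icc a b, ‖u y‖ ≤ R := by
  have hR : 0 ≤ R := (norm_nonneg _).trans ha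
  have hsq : ∀ y ∈ Icc a b, ‖u y‖ ^ 2 ≤ R ^ 2 := by
    refine le_of_deriv_deriv_pos_of_lt (huc.norm.pow 2) (fun y hy hlt => ?_)
      (by gcongr) (by gcongr)
    have hinner := hpos y hy (lt_of_pow_lt_pow_left₀ 2 (norm_nonneg _) hlt)
    rw [deriv_deriv_norm_sq (hu.contDiffAt (isOpen_Ioo.mem_nhds hy))]
    positivity
  exact fun y hy => le_of_sq_le_sq (hsq y hy) hR

-- For fixed `y`, apply the scalar estimate to the component `⟪u y, u ·⟫` of `u`.
theorem norm_le_mul_of_norm_deriv_deriv_le {K : ℝ} (huc : ContinuousOn u (Icc a b))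
    (hu : ContDiffOn ℝ 2 u (Ioo a b)) (hK : ∀ y ∈ Ioo a b, ‖deriv (deriv u) y‖ ≤ K)
    (ha : u a = 0) (hb : u b = 0) : ∀ y ∈ Icc a b, ‖u y‖ ≤ K / 2 * ((y - a) * (b - y)) := by
  intro y hy
  rcases eq_or_ne (u y) 0 with hzero | hne
  · rcases eq_endpoints_or_mem_Ioo_of_mem_Icc hy with rfl | rfl | hy'
    · simp [ha]
    · simp [hb]
    · have hK0 : 0 ≤ K := (norm_nonneg _).trans (hK y hy')
      have := mul_nonneg (sub_nonneg.2 hy.1) (sub_nonneg.2 hy.2)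
      rw [hzero, norm_zero]
      positivity
  have hcomponent := le_mul_of_neg_le_deriv_deriv (f := fun z => innerSL ℝ (u y) (u z))
    (K := ‖u y‖ * K) ((innerSL ℝ (u y)).continuous.comp_continuousOn huc)
    ((innerSL ℝ (u y)).contDiff.comp_contDiffOn hu) (fun z hz => ?_) (by simp [ha]) (by simp [hb])
    y hy
  · rw [innerSL_apply_apply, real_inner_self_eq_norm_mul_norm, mul_div_assoc, mul_assoc]
      at hcomponent
    exact le_of_mul_le_mul_left hcomponent (norm_pos_iff.2 hne)
  · rw [deriv_deriv_clm_comp _ (hu.contDiffAt (isOpen_Ioo.mem_nhds hz)), innerSL_apply_apply]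
    refine (abs_le.1 ((abs_real_inner_le_norm _ _).trans ?_)).1
    gcongr
    exact hK z hz

theorem norm_sub_line_le_of_inner_pos {F : E → E} {R K l : ℝ} {p v : E} (hl : 0 < l)
    (hpos : ∀ x, R < ‖x‖ → 0 < ⟪x, F x⟫) (hK : ∀ x, ‖x‖ ≤ R → ‖F x‖ ≤ K)
    (huc : ContinuousOn u (Icc a b)) (hu : ContDiffOn ℝ 2 u (Ioo a b))
    (hode : ∀ y ∈ Ioo a b, l • deriv (deriv u) y = F (u y))
    (ha : u a = p + a • v) (hb : u b = p + b • v) (haR : ‖u a‖ ≤ R) (hbR : ‖u b‖ ≤ R) :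
    ∀ y ∈ Icc a b, ‖u y - (p + y • v)‖ ≤ K / l / 2 * ((y - a) * (b - y)) := by
  have hbound : ∀ y ∈ Icc a b, ‖u y‖ ≤ R := by
    refine norm_le_of_inner_deriv_deriv_pos huc hu (fun y hy hlt => ?_) haR hbR
    have hinner := hpos (u y) hlt
    rw [← hode y hy, real_inner_smul_right] at hinner
    exact pos_of_mul_pos_right hinner hl.le
  refine norm_le_mul_of_norm_deriv_deriv_le (huc.sub (by fun_prop)) (hu.sub (by fun_prop))
    (fun y hy => ?_) (sub_eq_zero.2 ha) (sub_eq_zero.2 hb)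
  rw [deriv_deriv_sub (hu.contDiffAt (isOpen_Ioo.mem_nhds hy)) (by fun_prop),
    deriv_deriv_add_smul, sub_zero, le_div_iff₀' hl, ← norm_smul_of_nonneg hl.le, hode y hy]
  exact hK _ (hbound y (Ioo_subset_Icc_self hy))

end MaximumPrinciple

/-- The right-hand side of the ferronematic system, as a vector field in the coordinates
`(Q₁₁, Q₁₂, M₁, M₂)`. -/
noncomputable def ferroReaction (c : ℝ) (x : EuclideanSpace ℝ (Fin 4)) :
    EuclideanSpace ℝ (Fin 4) :=
  !₂[4 * x 0 * (x 0 ^ 2 + x 1 ^ 2 - 1) - c * (x 2 ^ 2 - x 3 ^ 2),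
    4 * x 1 * (x 0 ^ 2 + x 1 ^ 2 - 1) - 2 * c * x 2 * x 3,
    x 2 * (x 2 ^ 2 + x 3 ^ 2 - 1) - 2 * c * x 0 * x 2 - 2 * c * x 1 * x 3,
    x 3 * (x 2 ^ 2 + x 3 ^ 2 - 1) + 2 * c * x 0 * x 3 - 2 * c * x 1 * x 2]

theorem continuous_ferroReaction (c : ℝ) : Continuous (ferroReaction c) := by
  unfold ferroReaction
  fun_prop

theorem inner_ferroReaction (c : ℝ) (x : EuclideanSpace ℝ (Fin 4)) :
    ⟪x, ferroReaction c x⟫ =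
      4 * (x 0 ^ 2 + x 1 ^ 2) ^ 2 - 4 * (x 0 ^ 2 + x 1 ^ 2) +
        (x 2 ^ 2 + x 3 ^ 2) ^ 2 - (x 2 ^ 2 + x 3 ^ 2) -
        3 * c * (x 0 * (x 2 ^ 2 - x 3 ^ 2) + x 1 * (2 * x 2 * x 3)) := by
  simp only [ferroReaction, PiLp.inner_apply, RCLike.inner_apply, Real.ringHom_apply,
    Fin.sum_univ_four, Matrix.cons_val_zero, Matrix.cons_val_one, Matrix.cons_val]
  ring

-- Young's inequality; in complex notation the left-hand side is `3c Re (q * conj (m ^ 2))`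
-- with `q = q₁ + i q₂` and `m = m₁ + i m₂`.
theorem ferro_coupling_le (c q₁ q₂ m₁ m₂ : ℝ) :
    3 * c * (q₁ * (m₁ ^ 2 - m₂ ^ 2) + q₂ * (2 * m₁ * m₂)) ≤
      (m₁ ^ 2 + m₂ ^ 2) ^ 2 / 2 + 9 / 2 * c ^ 2 * (q₁ ^ 2 + q₂ ^ 2) := by
  linarith [sq_nonneg (m₁ ^ 2 - m₂ ^ 2 - 3 * c * q₁), sq_nonneg (2 * m₁ * m₂ - 3 * c * q₂)]

-- The quadratic and linear estimates below ask for `‖x‖ ^ 2 > 9 + 81 / 8 * c ^ 2`, which is implied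
-- by `‖x‖ > 3 + 4 * |c|`.
theorem inner_ferroReaction_pos {c : ℝ} {x : EuclideanSpace ℝ (Fin 4)}
    (hx : 3 + 4 * |c| < ‖x‖) : 0 < ⟪x, ferroReaction c x⟫ := by
  have hnorm : ‖x‖ ^ 2 = (x 0 ^ 2 + x 1 ^ 2) + (x 2 ^ 2 + x 3 ^ 2) := by
    rw [EuclideanSpace.real_norm_sq_eq, Fin.sum_univ_four]
    ring
  have hlarge : 9 + 16 * c ^ 2 < ‖x‖ ^ 2 := by
    nlinarith [abs_nonneg c, sq_abs c]
  have hcoupling := ferro_coupling_le c (x 0) (x 1) (x 2) (x 3)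
  rw [inner_ferroReaction]
  have hs : 0 ≤ x 0 ^ 2 + x 1 ^ 2 := by positivity
  have ht : 0 ≤ x 2 ^ 2 + x 3 ^ 2 := by positivity
  generalize x 0 ^ 2 + x 1 ^ 2 = s at hnorm hcoupling hs ⊢
  generalize x 2 ^ 2 + x 3 ^ 2 = t at hnorm hcoupling ht ⊢
  have hquad : 4 / 9 * (s + t) ^ 2 ≤ 4 * s ^ 2 + t ^ 2 / 2 := by
    linarith [sq_nonneg (8 * s - t)]
  have hlin : 4 * s + t + 9 / 2 * c ^ 2 * s ≤ (4 + 9 / 2 * c ^ 2) * (s + t) := by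
    nlinarith [mul_nonneg (sq_nonneg c) ht]
  have hgap : (4 + 9 / 2 * c ^ 2) * (s + t) < 4 / 9 * (s + t) ^ 2 := by
    nlinarith [sq_nonneg c]
  linarith

namespace FerroSolution

variable {l c : ℝ} {Q11 Q12 M1 M2 : ℝ → ℝ}

theorem contDiffOn (h : FerroSolution l c Q11 Q12 M1 M2) :
    ContDiffOn ℝ 2 (fun y => !₂[Q11 y, Q12 y, M1 y, M2 y]) (Icc (-1) 1) := by
  obtain ⟨hQ11, hQ12, hM1, hM2, -⟩ := h
  rw [contDiffOn_euclidean]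
  intro i
  fin_cases i <;> simpa

theorem smul_deriv_deriv (h : FerroSolution l c Q11 Q12 M1 M2) :
    ∀ y ∈ Ioo (-1 : ℝ) 1, l • deriv (deriv fun z => !₂[Q11 z, Q12 z, M1 z, M2 z]) y =
      ferroReaction c !₂[Q11 y, Q12 y, M1 y, M2 y] := by
  intro y hy
  have hcoord (i : Fin 4) := deriv_deriv_clm_comp (EuclideanSpace.proj i)
    (h.contDiffOn.contDiffAt (Icc_mem_nhds hy.1 hy.2))
  obtain ⟨-, -, -, -, eQ11, eQ12, eM1, eM2, -⟩ := h
  ext i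
  rw [PiLp.smul_apply, smul_eq_mul]
  refine (congrArg (l * ·) (hcoord i).symm).trans ?_
  fin_cases i
  · exact eQ11 y hy
  · exact eQ12 y hy
  · exact eM1 y hy
  · exact eM2 y hy

theorem norm_sub_profile_le {K : ℝ} (hl : 0 < l) (h : FerroSolution l c Q11 Q12 M1 M2)
    (hK : ∀ x, ‖x‖ ≤ 3 + 4 * |c| → ‖ferroReaction c x‖ ≤ K) :
    ∀ y ∈ Icc (-1 : ℝ) 1,
      ‖!₂[Q11 y, Q12 y, M1 y, M2 y] - y • !₂[-1, 0, -1, 0]‖ ≤ K / l / 2 := by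
  have hleft : !₂[Q11 (-1), Q12 (-1), M1 (-1), M2 (-1)] = (-1 : ℝ) • !₂[-1, 0, -1, 0] := by
    obtain ⟨-, -, -, -, -, -, -, -, hQ11, hM1, -, -, hQ12, -, hM2, -⟩ := h
    ext i
    fin_cases i <;> simp [hQ11, hQ12, hM1, hM2]
  have hright : !₂[Q11 1, Q12 1, M1 1, M2 1] = (1 : ℝ) • !₂[-1, 0, -1, 0] := by
    obtain ⟨-, -, -, -, -, -, -, -, -, -, hQ11, hM1, -, hQ12, -, hM2⟩ := h
    rw [hQ11, hQ12, hM1, hM2, one_smul]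
  have hslope : ‖(!₂[-1, 0, -1, 0] : EuclideanSpace ℝ (Fin 4))‖ ≤ 3 + 4 * |c| := by
    have hsq : ‖(!₂[-1, 0, -1, 0] : EuclideanSpace ℝ (Fin 4))‖ ^ 2 = 1 + 1 := by
      simp [EuclideanSpace.real_norm_sq_eq, Fin.sum_univ_four]
    nlinarith [abs_nonneg c]
  intro y hy
  have hparabola := norm_sub_line_le_of_inner_pos (p := 0) (v := !₂[-1, 0, -1, 0]) hl
    (fun _ => inner_ferroReaction_pos) hK h.contDiffOn.continuousOn
    (h.contDiffOn.mono Ioo_subset_Icc_self) h.smul_deriv_deriv (by rw [hleft, zero_add])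
    (by rw [hright, zero_add]) (by simpa [hleft, neg_smul] using hslope) (by rwa [hright, one_smul])
    y hy
  have hK0 : 0 ≤ K := (norm_nonneg _).trans (hK 0 (by rw [norm_zero]; positivity))
  rw [zero_add] at hparabola
  refine hparabola.trans (mul_le_of_le_one_right (by positivity) ?_)
  linarith [sq_nonneg y]

end FerroSolution

theorem ferro_convergence_to_linear_profile_general (c : ℝ) :
    ∃ α₁ : ℝ, 0 < α₁ ∧ ∃ α₂ : ℝ, 0 < α₂ ∧
      ∀ l : ℝ, 0 < l → ∀ Q11 Q12 M1 M2 : ℝ → ℝ,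
        FerroSolution l c Q11 Q12 M1 M2 →
        ∀ y ∈ Icc (-1 : ℝ) 1,
          |Q11 y + y| ≤ α₁ / l ∧ |Q12 y| ≤ α₁ / l ∧
          |M1 y + y| ≤ α₂ / l ∧ |M2 y| ≤ α₂ / l := by
  obtain ⟨K, hK0, hK⟩ :=
    exists_pos_norm_le_of_continuous (continuous_ferroReaction c) (3 + 4 * |c|)
  refine ⟨K / 2, half_pos hK0, K / 2, half_pos hK0, fun l hl Q11 Q12 M1 M2 h y hy => ?_⟩
  have hcoord (i : Fin 4) := (PiLp.norm_apply_le _ i).trans (h.norm_sub_profile_le hl hK y hy)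
  rw [div_right_comm]
  exact ⟨by simpa using hcoord 0, by simpa using hcoord 1, by simpa using hcoord 2,
    by simpa using hcoord 3⟩

/-- Convergence to the linear order-reconstruction profile `(−y, 0, −y, 0)` as the
elastic constant `l → ∞`, at rate `1/l`. -/
theorem ferro_convergence_to_linear_profile (c : ℝ) (hc : 0 < c) :
    ∃ α₁ : ℝ, 0 < α₁ ∧ ∃ α₂ : ℝ, 0 < α₂ ∧
      ∀ l : ℝ, 0 < l → ∀ Q11 Q12 M1 M2 : ℝ → ℝ,
        FerroSolution l c Q11 Q12 M1 M2 →
        ∀ y ∈ Icc (-1 : ℝ) 1,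
          |Q11 y + y| ≤ α₁ / l ∧ |Q12 y| ≤ α₁ / l ∧
          |M1 y + y| ≤ α₂ / l ∧ |M2 y| ≤ α₂ / l :=
  ferro_convergence_to_linear_profile_general c
end
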